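/- Let n ≥ 1, let ρ, σ be n×n complex density matrices (Hermitian, positive semidefinite, trace 1), let S be the swap operator on ℂⁿ⊗ℂⁿ, and let 0 < Δt ≤ 1. Then, in the ℓ²→ℓ² operator norm, ‖ Tr₁[exp(−i Δt S)(ρ⊗σ)exp(i Δt S)] − (σ − i Δt (ρσ − σρ)) ‖ ≤ 4·Δt². -/

import Mathlib

open Matrix
open scoped Kronecker Matrix.Norms.L2Operator ComplexOrder

/-- The swap operator `S` on `ℂⁿ ⊗ ℂⁿ`, with entries `S[(i,j),(k,l)] = δ_{i,l} δ_{j,k}`. -/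
noncomputable def swapOp (n : ℕ) : Matrix (Fin n × Fin n) (Fin n × Fin n) ℂ :=
  Matrix.of fun p q => if p.1 = q.2 ∧ p.2 = q.1 then 1 else 0

/-- Partial trace over the first tensor factor:
`(Tr₁ M)[j,l] = Σ_i M[(i,j),(i,l)]`. -/
noncomputable def ptrace1 {n : ℕ} (M : Matrix (Fin n × Fin n) (Fin n × Fin n) ℂ) :
    Matrix (Fin n) (Fin n) ℂ :=
  Matrix.of fun j l => ∑ i : Fin n, M (i, j) (i, l)

/-!
Since `S² = 1`, the exponential is `exp (zS) = cosh z + (sinh z) S`, so the conjugated state is a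
combination of `ρ ⊗ σ`, `S (ρ ⊗ σ) S = σ ⊗ ρ` and the commutator `[S, ρ ⊗ σ]`, whose partial traces
are `(tr ρ) σ`, `(tr σ) ρ` and `[ρ, σ]`. At `z = i Δt` and `tr ρ = 1` the error is exactly
`sin² Δt ((tr σ) ρ - σ) + i (Δt - cos Δt sin Δt) [ρ, σ]`, and both coefficients are at most `Δt²`
in absolute value.
-/

section Involution

variable {A : Type*} [NormedRing A] [NormedAlgebra ℂ A] [CompleteSpace A] {a : A}

lemma exp_smul_of_mul_self_eq_one (ha : a * a = 1) (z : ℂ) :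
    NormedSpace.exp (z • a) = Complex.cosh z • (1 : A) + Complex.sinh z • a := by
  have pow_even (k : ℕ) : a ^ (2 * k) = 1 := by rw [pow_mul, pow_two, ha, one_pow]
  have pow_odd (k : ℕ) : a ^ (2 * k + 1) = a := by rw [pow_succ, pow_even, one_mul]
  refine (NormedSpace.exp_series_hasSum_exp' (𝕂 := ℂ) (z • a)).unique (HasSum.even_add_odd ?_ ?_)
  · simpa only [smul_pow, pow_even, smul_smul, div_eq_inv_mul]
      using (Complex.hasSum_cosh z).smul_const (1 : A)
  · simpa only [smul_pow, pow_odd, smul_smul, div_eq_inv_mul]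
      using (Complex.hasSum_sinh z).smul_const a

lemma exp_neg_smul_mul_mul_exp_smul_of_mul_self_eq_one (ha : a * a = 1) (z : ℂ) (x : A) :
    NormedSpace.exp ((-z) • a) * x * NormedSpace.exp (z • a) =
      Complex.cosh z ^ 2 • x - Complex.sinh z ^ 2 • (a * x * a) -
        (Complex.cosh z * Complex.sinh z) • (a * x - x * a) := by
  rw [exp_smul_of_mul_self_eq_one ha, exp_smul_of_mul_self_eq_one ha, Complex.cosh_neg,
    Complex.sinh_neg]
  simp only [add_mul, mul_add, smul_mul_assoc, mul_smul_comm, one_mul, mul_one]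
  module

end Involution

section PartialTrace

variable {n : ℕ}

lemma ptrace1_sub (M N : Matrix (Fin n × Fin n) (Fin n × Fin n) ℂ) :
    ptrace1 (M - N) = ptrace1 M - ptrace1 N := by
  ext j l
  simp [ptrace1]

lemma ptrace1_smul (c : ℂ) (M : Matrix (Fin n × Fin n) (Fin n × Fin n) ℂ) :
    ptrace1 (c • M) = c • ptrace1 M := by
  ext j l
  simp [ptrace1, Finset.mul_sum]

lemma ptrace1_kronecker (ρ σ : Matrix (Fin n) (Fin n) ℂ) :
    ptrace1 (ρ ⊗ₖ σ) = ρ.trace • σ := by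
  ext j l
  simp [ptrace1, Matrix.trace, Finset.sum_mul]

end PartialTrace

section Swap

variable {n : ℕ}

lemma swapOp_eq_permMatrix (n : ℕ) :
    swapOp n = Equiv.Perm.permMatrix ℂ (Equiv.prodComm (Fin n) (Fin n)) := by
  ext ⟨i, j⟩ ⟨k, l⟩
  simp [swapOp, PEquiv.toMatrix_apply, and_comm, eq_comm]

lemma swapOp_mul (M : Matrix (Fin n × Fin n) (Fin n × Fin n) ℂ) :
    swapOp n * M = M.submatrix Prod.swap id := by
  rw [swapOp_eq_permMatrix, PEquiv.toMatrix_toPEquiv_mul, Equiv.coe_prodComm]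

lemma mul_swapOp (M : Matrix (Fin n × Fin n) (Fin n × Fin n) ℂ) :
    M * swapOp n = M.submatrix id Prod.swap := by
  rw [swapOp_eq_permMatrix, PEquiv.mul_toMatrix_toPEquiv, Equiv.prodComm_symm, Equiv.coe_prodComm]

lemma swapOp_mul_self (n : ℕ) : swapOp n * swapOp n = 1 := by
  rw [swapOp_eq_permMatrix, ← permMatrix_mul, ← permMatrix_one]
  rfl

lemma swapOp_mul_kronecker_mul_swapOp (ρ σ : Matrix (Fin n) (Fin n) ℂ) :
    swapOp n * (ρ ⊗ₖ σ) * swapOp n = σ ⊗ₖ ρ := by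
  ext p q
  simp [swapOp_mul, mul_swapOp, mul_comm]

lemma ptrace1_swapOp_mul_kronecker (ρ σ : Matrix (Fin n) (Fin n) ℂ) :
    ptrace1 (swapOp n * (ρ ⊗ₖ σ)) = ρ * σ := by
  ext j l
  rw [swapOp_mul, Matrix.mul_apply]
  simp [ptrace1]

lemma ptrace1_kronecker_mul_swapOp (ρ σ : Matrix (Fin n) (Fin n) ℂ) :
    ptrace1 ((ρ ⊗ₖ σ) * swapOp n) = σ * ρ := by
  ext j l
  rw [mul_swapOp, Matrix.mul_apply]
  simp [ptrace1, mul_comm]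

lemma ptrace1_exp_swapOp_conj_kronecker (ρ σ : Matrix (Fin n) (Fin n) ℂ) (z : ℂ) :
    ptrace1 (NormedSpace.exp ((-z) • swapOp n) * (ρ ⊗ₖ σ) * NormedSpace.exp (z • swapOp n)) =
      Complex.cosh z ^ 2 • ρ.trace • σ - Complex.sinh z ^ 2 • σ.trace • ρ -
        (Complex.cosh z * Complex.sinh z) • (ρ * σ - σ * ρ) := by
  rw [exp_neg_smul_mul_mul_exp_smul_of_mul_self_eq_one (swapOp_mul_self n),
    swapOp_mul_kronecker_mul_swapOp]
  simp only [ptrace1_sub, ptrace1_smul, ptrace1_kronecker, ptrace1_swapOp_mul_kronecker,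
    ptrace1_kronecker_mul_swapOp]

lemma ptrace1_exp_swapOp_conj_kronecker_sub (ρ σ : Matrix (Fin n) (Fin n) ℂ)
    (hρtr : ρ.trace = 1) (t : ℝ) :
    ptrace1 (NormedSpace.exp ((-(Complex.I * (t : ℂ))) • swapOp n) * (ρ ⊗ₖ σ) *
          NormedSpace.exp ((Complex.I * (t : ℂ)) • swapOp n)) -
        (σ - (Complex.I * (t : ℂ)) • (ρ * σ - σ * ρ)) =
      ((Real.sin t ^ 2 : ℝ) : ℂ) • (σ.trace • ρ - σ) +
        (((t - Real.cos t * Real.sin t : ℝ) : ℂ) * Complex.I) • (ρ * σ - σ * ρ) := by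
  rw [ptrace1_exp_swapOp_conj_kronecker, hρtr, one_smul, mul_comm Complex.I, Complex.cosh_mul_I,
    Complex.sinh_mul_I, mul_pow, Complex.I_sq, Complex.cos_sq']
  push_cast
  module

end Swap

section Bounds

lemma abs_sub_sin_le_sq_div_two (x : ℝ) : |x - Real.sin x| ≤ x ^ 2 / 2 := by
  rw [← sq_abs x]
  -- The cubic Taylor bound suffices up to `|x| = 3`, where the crude bound `|x| + 1` takes over.
  rcases le_total |x| 3 with hx | hx
  · calc |x - Real.sin x| ≤ |x| ^ 3 / 6 := Real.abs_sub_sin_le x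
      _ ≤ |x| ^ 2 / 2 := by nlinarith [mul_le_mul_of_nonneg_left hx (sq_nonneg |x|)]
  · calc |x - Real.sin x| ≤ |x| + |Real.sin x| := abs_sub _ _
      _ ≤ |x| + 1 := by gcongr; exact Real.abs_sin_le_one x
      _ ≤ |x| ^ 2 / 2 := by nlinarith

lemma abs_sub_cos_mul_sin_le_sq (t : ℝ) : |t - Real.cos t * Real.sin t| ≤ t ^ 2 := by
  have double_angle : t - Real.cos t * Real.sin t = (2 * t - Real.sin (2 * t)) / 2 := by
    rw [Real.sin_two_mul]
    ring
  rw [double_angle, abs_div, abs_two]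
  linarith [abs_sub_sin_le_sq_div_two (2 * t)]

lemma norm_sub_add_norm_commutator_le_four {R : Type*} [NonUnitalSeminormedRing R] {a b : R}
    (ha : ‖a‖ ≤ 1) (hb : ‖b‖ ≤ 1) : ‖a - b‖ + ‖a * b - b * a‖ ≤ 4 := by
  have hab : ‖a * b‖ ≤ 1 := (norm_mul_le a b).trans (mul_le_one₀ ha (norm_nonneg b) hb)
  have hba : ‖b * a‖ ≤ 1 := (norm_mul_le b a).trans (mul_le_one₀ hb (norm_nonneg a) ha)
  linarith [norm_sub_le a b, norm_sub_le (a * b) (b * a)]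

variable {ι 𝕜 : Type*} [Fintype ι] [DecidableEq ι] [RCLike 𝕜] {A : Matrix ι ι 𝕜}

lemma norm_eq_norm_eigenvalues (hA : A.IsHermitian) : ‖A‖ = ‖hA.eigenvalues‖ := by
  have spectral := congrArg norm hA.spectral_theorem
  rw [Unitary.conjStarAlgAut_apply, ← Unitary.coe_star, CStarRing.norm_mul_coe_unitary,
    CStarRing.norm_coe_unitary_mul, l2_opNorm_diagonal] at spectral
  rw [spectral]
  simp [Pi.norm_def]

lemma norm_le_re_trace_of_posSemidef (hA : A.PosSemidef) : ‖A‖ ≤ RCLike.re A.trace := by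
  have trace_eq : RCLike.re A.trace = ∑ i, hA.isHermitian.eigenvalues i := by
    simp [hA.isHermitian.trace_eq_sum_eigenvalues]
  rw [trace_eq, norm_eq_norm_eigenvalues hA.isHermitian]
  refine (pi_norm_le_iff_of_nonneg
    (Finset.sum_nonneg fun i _ => hA.eigenvalues_nonneg i)).2 fun i => ?_
  rw [Real.norm_of_nonneg (hA.eigenvalues_nonneg i)]
  exact Finset.single_le_sum (fun j _ => hA.eigenvalues_nonneg j) (Finset.mem_univ i)

lemma norm_le_one_of_posSemidef_of_trace_eq_one (hA : A.PosSemidef) (htr : A.trace = 1) :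
    ‖A‖ ≤ 1 := by
  simpa [htr] using norm_le_re_trace_of_posSemidef hA

end Bounds

theorem ptrace1_exp_swap_conj_approx_commutator_general {n : ℕ}
    (ρ σ : Matrix (Fin n) (Fin n) ℂ) (hρtr : ρ.trace = 1) (Δt : ℝ) :
    ‖ptrace1 (NormedSpace.exp ((-(Complex.I * (Δt : ℂ))) • swapOp n) * (ρ ⊗ₖ σ) *
          NormedSpace.exp ((Complex.I * (Δt : ℂ)) • swapOp n)) -
        (σ - (Complex.I * (Δt : ℂ)) • (ρ * σ - σ * ρ))‖ ≤
      (‖σ.trace • ρ - σ‖ + ‖ρ * σ - σ * ρ‖) * Δt ^ 2 := by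
  rw [ptrace1_exp_swapOp_conj_kronecker_sub ρ σ hρtr]
  calc _ ≤ Real.sin Δt ^ 2 * ‖σ.trace • ρ - σ‖ +
        |Δt - Real.cos Δt * Real.sin Δt| * ‖ρ * σ - σ * ρ‖ := by
        refine (norm_add_le _ _).trans_eq ?_
        rw [norm_smul, norm_smul, norm_mul, Complex.norm_I, mul_one, Complex.norm_real,
          Complex.norm_real, Real.norm_eq_abs, Real.norm_eq_abs, abs_sq]
    _ ≤ Δt ^ 2 * ‖σ.trace • ρ - σ‖ + Δt ^ 2 * ‖ρ * σ - σ * ρ‖ := by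
        gcongr ?_ * _ + ?_ * _
        · exact Real.sin_sq_le_sq
        · exact abs_sub_cos_mul_sin_le_sq Δt
    _ = (‖σ.trace • ρ - σ‖ + ‖ρ * σ - σ * ρ‖) * Δt ^ 2 := by ring

/-- For density matrices `ρ, σ` and `0 < Δt ≤ 1`, in the ℓ²→ℓ² operator norm,
`‖Tr₁[exp(−iΔtS)(ρ⊗σ)exp(iΔtS)] − (σ − iΔt[ρ,σ])‖ ≤ 4·Δt²`. -/
theorem ptrace1_exp_swap_conj_approx_commutator {n : ℕ} (hn : 1 ≤ n)
    (ρ σ : Matrix (Fin n) (Fin n) ℂ)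
    (hρ : ρ.PosSemidef) (hρtr : ρ.trace = 1)
    (hσ : σ.PosSemidef) (hσtr : σ.trace = 1)
    (Δt : ℝ) (hΔt0 : 0 < Δt) (hΔt1 : Δt ≤ 1) :
    ‖ptrace1 (NormedSpace.exp ((-(Complex.I * (Δt : ℂ))) • swapOp n) * (ρ ⊗ₖ σ) *
          NormedSpace.exp ((Complex.I * (Δt : ℂ)) • swapOp n)) -
        (σ - (Complex.I * (Δt : ℂ)) • (ρ * σ - σ * ρ))‖ ≤ 4 * Δt ^ 2 := by
  have norms_le_four := norm_sub_add_norm_commutator_le_four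
    (norm_le_one_of_posSemidef_of_trace_eq_one hρ hρtr)
    (norm_le_one_of_posSemidef_of_trace_eq_one hσ hσtr)
  exact (ptrace1_exp_swap_conj_approx_commutator_general ρ σ hρtr Δt).trans
    (by rw [hσtr, one_smul]; gcongr)
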